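/- arXiv:2311.13582 — 2 statements merged into one kernel-verified Lean document; each statement's English description precedes it below -/
import Mathlib

section
/- For every integer k ≥ 2, the two-color Ramsey number of C_4 versus the book B_k satisfies R(C_4, B_k) ≤ R(C_4, K_{1,k}) + ⌈√(R(C_4, K_{1,k}))⌉ + 1, and consequently R(C_4, B_k) ≤ k + ⌈ √( k + ⌈√k⌉ + 1 ) ⌉ + ⌈√k⌉ + 2. -/
open SimpleGraph

/-- A graph bundled with its vertex type. -/
structure VGraph : Type 1 where
  V : Type
  G : SimpleGraph V

/-- The cycle `C₄` as a bundled graph. -/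
def C4 : VGraph := ⟨Fin 4, SimpleGraph.cycleGraph 4⟩

/-- The path `P₃` (on 3 vertices) as a bundled graph. -/
def P3 : VGraph := ⟨Fin 3, SimpleGraph.pathGraph 3⟩

/-- The complete graph `K_k` as a bundled graph. -/
def Kc (k : ℕ) : VGraph := ⟨Fin k, ⊤⟩

/-- The star `K_{1,k}`: vertex `0` is the center, joined to the `k` leaves. -/
def starGraph (k : ℕ) : SimpleGraph (Fin (k + 1)) :=
  SimpleGraph.fromRel (fun u _ => u = 0)

/-- The book `B_k = K₂ + kK₁`: vertices `0, 1` form the spine, joined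
to everything; the `k` pages are pairwise nonadjacent. -/
def bookGraph (k : ℕ) : SimpleGraph (Fin (k + 2)) :=
  SimpleGraph.fromRel (fun u _ => u.val < 2)

/-- Deletion of a vertex (with all incident edges) from a bundled graph. -/
def VGraph.delete (X : VGraph) (w : X.V) : VGraph :=
  ⟨{v : X.V // v ≠ w}, X.G.induce {v | v ≠ w}⟩

/-- Disjoint union with a single isolated vertex, `G ∪ K₁`. -/
def VGraph.addK1 (X : VGraph) : VGraph :=
  ⟨Option X.V, SimpleGraph.fromRel (fun u v => ∃ a b, u = some a ∧ v = some b ∧ X.G.Adj a b)⟩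

/-- `ramseyProp l N` : every coloring of the edges of the complete graph on `N`
vertices with `l.length` colors admits, for some color `i`, a subgraph isomorphic
to the `i`-th graph of `l` all of whose edges have color `i`. -/
def ramseyProp (l : List VGraph) (N : ℕ) : Prop :=
  ∀ c : Sym2 (Fin N) → Fin l.length,
    ∃ (i : Fin l.length) (f : (l.get i).V ↪ Fin N),
      ∀ u v, (l.get i).G.Adj u v → c s(f u, f v) = i

/-- The Ramsey number of a list of graphs: the least positive `N`
satisfying `ramseyProp l N`. -/
noncomputable def ramseyNumber (l : List VGraph) : ℕ :=
  sInf {N | 0 < N ∧ ramseyProp l N}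

/-!
Suppose every vertex of a `C₄`-free graph on at most `s² + s + 1` vertices has degree at least
`s + 1`. Two vertices have at most one common neighbour, so counting the paths of length two from
a vertex forces equality everywhere: the graph is `(s + 1)`-regular and any two vertices have
exactly one common neighbour. As in the friendship theorem, this is impossible for `s ≥ 2`: modulo
a prime `p ∣ s` the adjacency matrix satisfies `A² = J` and `JA = J`, so `J = A ^ p`, whose trace
is `(tr A) ^ p = 0`, whereas `J² = J` gives `tr J = |V| = 1`.

Hence, when `N ≤ s²`, a `C₄`-free graph on `N + s + 1` vertices has a vertex `v` of degree at most
`s`, with at least `N` non-neighbours. If `R(C₄, X - w) ≤ N`, the complement restricted to these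
contains `X - w`, which `v` completes to `X`. Deleting the centre of `K_{1,k}` leaves `k` isolated
vertices, and deleting a spine vertex of `B_k` leaves `K_{1,k}`.
-/

section CommonNeighbors

variable {V : Type*} {G : SimpleGraph V}

theorem subsingleton_commonNeighbors_of_cycleGraph_four_free (hG : (cycleGraph 4).Free G)
    {v w : V} (hvw : v ≠ w) : (G.commonNeighbors v w).Subsingleton := by
  rintro a ⟨hva : G.Adj v a, hwa : G.Adj w a⟩ b ⟨hvb : G.Adj v b, hwb : G.Adj w b⟩
  by_contra hab
  let cycle : G.Walk v v := .cons hva (.cons hwa.symm (.cons hwb (.cons hvb.symm .nil)))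
  have cycle_isCycle : cycle.IsCycle := by
    simp [cycle, Walk.isCycle_def, Walk.isTrail_def, hab, hvw, hvw.symm, hva.ne, hva.ne', hvb.ne,
      hvb.ne', hwa.ne', hwb.ne]
  exact hG ((cycleGraph_isContained_iff (by norm_num)).2 ⟨v, cycle, cycle_isCycle, rfl⟩)

variable [Fintype V] [DecidableRel G.Adj]

theorem degree_add_sum_card_commonNeighbors [DecidableEq V] (v : V) :
    G.degree v + ∑ w ∈ Finset.univ.erase v, Fintype.card (G.commonNeighbors v w) =
      ∑ u ∈ G.neighborFinset v, G.degree u := by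
  have card_self : Fintype.card (G.commonNeighbors v v) = G.degree v := by
    simp [commonNeighbors_eq, ← card_neighborSet_eq_degree]
  have card_eq (w : V) : Fintype.card (G.commonNeighbors v w) =
      ((G.neighborFinset v).bipartiteAbove G.Adj w).card := by
    rw [← Set.toFinset_card]
    congr 1
    ext u
    simp [Finset.mem_bipartiteAbove, mem_commonNeighbors]
  have degree_eq (u : V) : G.degree u = (Finset.univ.bipartiteBelow G.Adj u).card := by
    rw [← card_neighborFinset_eq_degree]
    congr 1
    ext w
    simp [Finset.mem_bipartiteBelow, adj_comm]
  rw [← card_self,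
    Finset.add_sum_erase _ (fun w => Fintype.card (G.commonNeighbors v w)) (Finset.mem_univ v)]
  simp only [card_eq, degree_eq]
  exact Finset.sum_card_bipartiteAbove_eq_sum_card_bipartiteBelow G.Adj

theorem mul_degree_le_sum_card_commonNeighbors [DecidableEq V] {d : ℕ}
    (hdeg : ∀ u, d + 1 ≤ G.degree u) (v : V) :
    d * G.degree v ≤ ∑ w ∈ Finset.univ.erase v, Fintype.card (G.commonNeighbors v w) := by
  have sum_degree_ge : G.degree v * (d + 1) ≤ ∑ u ∈ G.neighborFinset v, G.degree u := by
    simpa using (G.neighborFinset v).card_nsmul_le_sum _ _ fun u _ => hdeg u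
  linarith [degree_add_sum_card_commonNeighbors (G := G) v]

theorem isSRGWith_one_one_of_card_commonNeighbors_le_one {d : ℕ} (hd : 0 < d)
    (hcommon : Pairwise fun v w => Fintype.card (G.commonNeighbors v w) ≤ 1)
    (hdeg : ∀ v, d + 1 ≤ G.degree v) (hcard : Fintype.card V ≤ d ^ 2 + d + 1) :
    G.IsSRGWith (Fintype.card V) (d + 1) 1 1 := by
  classical
  have common_le (v w : V) (hw : w ∈ Finset.univ.erase v) :
      Fintype.card (G.commonNeighbors v w) ≤ 1 := hcommon (Finset.ne_of_mem_erase hw).symm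
  have sum_one_le (v : V) : ∑ w ∈ Finset.univ.erase v, 1 ≤ d * (d + 1) := by
    simp only [Finset.sum_const, Finset.card_erase_of_mem (Finset.mem_univ v), Finset.card_univ,
      smul_eq_mul, mul_one]
    linarith [Nat.sub_le_of_le_add hcard]
  have regular (v : V) : G.degree v = d + 1 := by
    refine (Nat.le_of_mul_le_mul_left ?_ hd).antisymm (hdeg v)
    exact (mul_degree_le_sum_card_commonNeighbors hdeg v).trans
      ((Finset.sum_le_sum (common_le v)).trans (sum_one_le v))
  have common_eq {v w : V} (hvw : v ≠ w) : Fintype.card (G.commonNeighbors v w) = 1 := by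
    have sum_eq := (Finset.sum_le_sum (common_le v)).antisymm
      ((sum_one_le v).trans (regular v ▸ mul_degree_le_sum_card_commonNeighbors hdeg v))
    exact (Finset.sum_eq_sum_iff_of_le (common_le v)).1 sum_eq w
      (Finset.mem_erase.2 ⟨hvw.symm, Finset.mem_univ w⟩)
  exact ⟨rfl, regular, fun _ _ hadj => common_eq hadj.ne, fun _ _ hvw _ => common_eq hvw⟩

end CommonNeighbors

section StronglyRegular

variable {V : Type*} [Fintype V] {G : SimpleGraph V} [DecidableRel G.Adj]

theorem adjMatrix_sq_eq_of_one_of_isSRGWith_one_one [DecidableEq V] {R : Type*} [Semiring R]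
    {n d : ℕ} (h : G.IsSRGWith n (d + 1) 1 1) (hd : (d : R) = 0) :
    G.adjMatrix R ^ 2 = Matrix.of 1 := by
  classical
  rw [h.matrix_eq, ← one_add_adjMatrix_add_compl_adjMatrix_eq_of_one (G := G) (α := R),
    compl_adjMatrix_eq_adjMatrix_compl, one_smul, one_smul, ← Nat.cast_smul_eq_nsmul R (d + 1)]
  simp [hd]

theorem eq_one_of_isSRGWith_one_one [Nonempty V] {n d : ℕ} (h : G.IsSRGWith n (d + 1) 1 1) :
    d = 1 := by
  classical
  by_contra hd
  obtain ⟨p, hp, hpd⟩ := Nat.exists_prime_and_dvd hd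
  have : Fact p.Prime := ⟨hp⟩
  set A := G.adjMatrix (ZMod p) with hA
  set J : Matrix V V (ZMod p) := Matrix.of 1 with hJ
  have d_eq_zero : (d : ZMod p) = 0 := (ZMod.natCast_eq_zero_iff d p).2 hpd
  have A_sq : A ^ 2 = J := adjMatrix_sq_eq_of_one_of_isSRGWith_one_one h d_eq_zero
  have J_mul_A : J * A = J := by
    ext v w
    simp [hA, hJ, h.regular w, d_eq_zero]
  have A_pow (m : ℕ) : A ^ (m + 2) = J := by
    induction m with
    | zero => exact A_sq
    | succ m ih => rw [Nat.add_right_comm, pow_succ, ih, J_mul_A]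
  have card_eq_one : (Fintype.card V : ZMod p) = 1 := by
    obtain ⟨v⟩ := ‹Nonempty V›
    have J_mul_J : J * J = J := by rw [← A_sq, ← pow_add, A_pow 2, A_sq]
    simpa [hJ, Matrix.mul_apply] using congrFun₂ J_mul_J v v
  have trace_eq : J.trace = A.trace ^ p := by
    rw [← ZMod.trace_pow_card A, ← A_pow (p - 2), Nat.sub_add_cancel hp.two_le]
  rw [trace_adjMatrix, zero_pow hp.ne_zero] at trace_eq
  exact one_ne_zero (card_eq_one.symm.trans (by simpa [hJ, Matrix.trace] using trace_eq))

end StronglyRegular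

theorem exists_degree_le_of_cycleGraph_four_free {V : Type*} [Fintype V] [Nonempty V]
    {G : SimpleGraph V} [DecidableRel G.Adj] {s : ℕ} (hG : (cycleGraph 4).Free G) (hs : 1 < s)
    (hcard : Fintype.card V ≤ s ^ 2 + s + 1) : ∃ v, G.degree v ≤ s := by
  classical
  by_contra! hdeg
  have card_commonNeighbors_le : Pairwise fun v w => Fintype.card (G.commonNeighbors v w) ≤ 1 :=
    fun v w hvw => Fintype.card_le_one_iff_subsingleton.2
      (subsingleton_commonNeighbors_of_cycleGraph_four_free hG hvw).coe_sort
  exact hs.ne' (eq_one_of_isSRGWith_one_one (isSRGWith_one_one_of_card_commonNeighbors_le_one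
    (zero_lt_one.trans hs) card_commonNeighbors_le hdeg hcard))

theorem isContained_of_delete_isContained_induce_neighborSet {V : Type*} {H : SimpleGraph V}
    {X : VGraph} {w : X.V} {v : V} (h : (X.delete w).G ⊑ H.induce (H.neighborSet v)) :
    X.G ⊑ H := by
  classical
  obtain ⟨f⟩ := h
  have adj_f (x) : H.Adj v (f x) := (f x).2
  let extend (x : X.V) : V := if hx : x = w then v else f ⟨x, hx⟩
  have extend_self : extend w = v := dif_pos rfl
  have extend_of_ne {x : X.V} (hx : x ≠ w) : extend x = f ⟨x, hx⟩ := dif_neg hx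
  have extend_injective : Function.Injective extend :=
    .dite (· = w) (f := fun _ => v) (f' := fun x => f x)
      (fun x y _ => Subtype.ext (x.2.trans y.2.symm))
      (Subtype.val_injective.comp f.injective) (adj_f _).ne
  refine ⟨⟨⟨extend, fun {x y} hxy => ?_⟩, extend_injective⟩⟩
  rcases eq_or_ne x w with rfl | hx
  · rw [extend_self, extend_of_ne hxy.ne']
    exact adj_f _
  rcases eq_or_ne y w with rfl | hy
  · rw [extend_self, extend_of_ne hx]
    exact (adj_f _).symm
  · rw [extend_of_ne hx, extend_of_ne hy]
    exact f.toHom.map_adj (v := ⟨x, hx⟩) (w := ⟨y, hy⟩) hxy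

section Ramsey

variable {X Y : VGraph} {N : ℕ}

theorem ramseyProp_pair_iff :
    ramseyProp [X, Y] N ↔ ∀ G : SimpleGraph (Fin N), X.G ⊑ G ∨ Y.G ⊑ Gᶜ := by
  classical
  constructor
  · intro h G
    obtain ⟨i, f, hf⟩ := h fun e => if e ∈ G.edgeSet then (0 : Fin 2) else 1
    match i, f, hf with
    | ⟨0, _⟩, f, hf =>
      refine .inl ⟨⟨f, fun {u v} huv => ?_⟩, f.injective⟩
      simpa using hf u v huv
    | ⟨1, _⟩, f, hf =>
      refine .inr ⟨⟨f, fun {u v} huv => ?_⟩, f.injective⟩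
      exact ⟨f.injective.ne huv.ne, by simpa using hf u v huv⟩
  · intro h c
    let G : SimpleGraph (Fin N) := fromEdgeSet {e | c e = (0 : Fin 2)}
    rcases h G with ⟨⟨f⟩⟩ | ⟨⟨f⟩⟩
    · exact ⟨(0 : Fin 2), f.toEmbedding, fun u v huv => (f.toHom.map_adj huv).1⟩
    · refine ⟨(1 : Fin 2), f.toEmbedding, fun u v huv => ?_⟩
      have f_adj : Gᶜ.Adj (f u) (f v) := f.toHom.map_adj huv
      have color_ne_zero : c s(f u, f v) ≠ (0 : Fin 2) := fun hc =>
        f_adj.2 ((fromEdgeSet_adj _).2 ⟨hc, f_adj.1⟩)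
      exact Fin.eq_one_of_ne_zero _ color_ne_zero

theorem isContained_or_isContained_compl_of_ramseyProp (h : ramseyProp [X, Y] N) {V : Type*}
    [Fintype V] (hN : N ≤ Fintype.card V) (G : SimpleGraph V) : X.G ⊑ G ∨ Y.G ⊑ Gᶜ := by
  obtain ⟨e⟩ : Nonempty (Fin N ↪ V) := Function.Embedding.nonempty_of_card_le (by simpa using hN)
  have comap_isInd : G.comap e ⊴ G := ⟨Embedding.comap e G⟩
  exact (ramseyProp_pair_iff.1 h (G.comap e)).imp (·.trans comap_isInd.isContained)
    (·.trans (compl_isIndContained_compl.2 comap_isInd).isContained)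

theorem ramseyProp_of_isContained {Y' : VGraph} (hY : Y'.G ⊑ Y.G) (h : ramseyProp [X, Y] N) :
    ramseyProp [X, Y'] N :=
  ramseyProp_pair_iff.2 fun G => (ramseyProp_pair_iff.1 h G).imp_right hY.trans

theorem card_le_of_ramseyProp [Fintype Y.V] (hX : X.G ≠ ⊥) (h : ramseyProp [X, Y] N) :
    Fintype.card Y.V ≤ N := by
  obtain ⟨f⟩ := (ramseyProp_pair_iff.1 h ⊥).resolve_left (free_bot hX)
  simpa using Fintype.card_le_of_embedding f.toEmbedding

theorem ramseyNumber_le {l : List VGraph} (hN : 0 < N) (h : ramseyProp l N) :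
    ramseyNumber l ≤ N :=
  Nat.sInf_le ⟨hN, h⟩

theorem ramseyProp_ramseyNumber {l : List VGraph} (hN : 0 < N) (h : ramseyProp l N) :
    ramseyProp l (ramseyNumber l) :=
  (Nat.sInf_mem (s := {N | 0 < N ∧ ramseyProp l N}) ⟨N, hN, h⟩).2

end Ramsey

theorem ramseyProp_C4_of_delete {X : VGraph} {w : X.V} {N s : ℕ} (hs : 1 < s) (hN : N ≤ s ^ 2)
    (h : ramseyProp [C4, X.delete w] N) : ramseyProp [C4, X] (N + s + 1) := by
  classical
  refine ramseyProp_pair_iff.2 fun G => or_iff_not_imp_left.2 fun (hG : (cycleGraph 4).Free G) => ?_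
  obtain ⟨v, hv⟩ : ∃ v, G.degree v ≤ s :=
    exists_degree_le_of_cycleGraph_four_free hG hs (by simpa using hN)
  have le_card_neighborSet : N ≤ Fintype.card (Gᶜ.neighborSet v) := by
    rw [card_neighborSet_eq_degree, degree_compl, Fintype.card_fin]
    omega
  have induced : G.induce (Gᶜ.neighborSet v) ⊴ G := ⟨Embedding.induce _⟩
  have induce_compl : (G.induce (Gᶜ.neighborSet v))ᶜ = Gᶜ.induce (Gᶜ.neighborSet v) := by
    ext x y
    simp [Subtype.ext_iff]
  refine isContained_of_delete_isContained_induce_neighborSet (w := w) (v := v) ?_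
  rw [← induce_compl]
  exact (isContained_or_isContained_compl_of_ramseyProp h le_card_neighborSet _).resolve_left
    fun hC4 => hG (hC4.trans induced.isContained)

theorem delete_zero_isContained_comap_succ {n : ℕ} (A : SimpleGraph (Fin (n + 1))) :
    (VGraph.delete ⟨Fin (n + 1), A⟩ (0 : Fin (n + 1))).G ⊑ A.comap Fin.succ := by
  rw [← Fin.succAbove_zero]
  exact (Iso.comap (finSuccAboveEquiv (0 : Fin (n + 1))) _).isContained'

theorem starGraph_comap_succ (k : ℕ) : (_root_.starGraph k).comap Fin.succ = ⊥ := by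
  ext u v
  simp [_root_.starGraph, Fin.succ_ne_zero]

theorem bookGraph_comap_succ (k : ℕ) : (bookGraph k).comap Fin.succ = _root_.starGraph k := by
  ext u v
  have succ_val_lt_two (x : Fin (k + 1)) : (x.succ : ℕ) < 2 ↔ x = 0 := by
    rw [Fin.val_succ, Fin.ext_iff, Fin.val_zero]
    omega
  simp only [comap_adj, bookGraph, _root_.starGraph, fromRel_adj, succ_val_lt_two, ne_eq,
    Fin.succ_inj]

theorem ramseyProp_C4_of_comap_succ {n N s : ℕ} {A : SimpleGraph (Fin (n + 1))} (hs : 1 < s)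
    (hN : N ≤ s ^ 2) (h : ramseyProp [C4, ⟨Fin n, A.comap Fin.succ⟩] N) :
    ramseyProp [C4, ⟨Fin (n + 1), A⟩] (N + s + 1) :=
  ramseyProp_C4_of_delete (w := (0 : Fin (n + 1))) hs hN
    (ramseyProp_of_isContained (delete_zero_isContained_comap_succ A) h)

theorem ramseyProp_starGraph {k s : ℕ} (hs : 1 < s) (hk : k ≤ s ^ 2) :
    ramseyProp [C4, ⟨Fin (k + 1), starGraph k⟩] (k + s + 1) := by
  refine ramseyProp_C4_of_comap_succ hs hk (ramseyProp_pair_iff.2 fun _ => .inr ?_)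
  rw [starGraph_comap_succ]
  exact bot_isContained_iff_card_le.2 le_rfl

theorem C4_ne_bot : C4.G ≠ ⊥ :=
  ne_bot_iff_exists_adj.2 ⟨(0 : Fin 4), (1 : Fin 4), by simp [C4, cycleGraph_adj]⟩

theorem le_ceil_sqrt_sq (n : ℕ) : n ≤ ⌈√(n : ℝ)⌉₊ ^ 2 := by
  exact_mod_cast (Real.sqrt_le_left (Nat.cast_nonneg _)).1 (Nat.le_ceil √(n : ℝ))

theorem one_lt_ceil_sqrt {n : ℕ} (hn : 1 < n) : 1 < ⌈√(n : ℝ)⌉₊ := by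
  rw [Nat.lt_ceil, Nat.cast_one, Real.lt_sqrt zero_le_one, one_pow]
  exact_mod_cast hn

theorem ramseyNumber_starGraph_le {k : ℕ} (hk : 1 < k) :
    ramseyNumber [C4, ⟨Fin (k + 1), starGraph k⟩] ≤ k + ⌈√(k : ℝ)⌉₊ + 1 :=
  ramseyNumber_le (Nat.succ_pos _) (ramseyProp_starGraph (one_lt_ceil_sqrt hk) (le_ceil_sqrt_sq k))

theorem ramseyNumber_bookGraph_le {k : ℕ} (hk : 0 < k) :
    ramseyNumber [C4, ⟨Fin (k + 2), bookGraph k⟩] ≤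
      ramseyNumber [C4, ⟨Fin (k + 1), starGraph k⟩] +
        ⌈√(ramseyNumber [C4, ⟨Fin (k + 1), starGraph k⟩] : ℝ)⌉₊ + 1 := by
  have star_prop : ramseyProp [C4, ⟨Fin (k + 1), starGraph k⟩]
      (ramseyNumber [C4, ⟨Fin (k + 1), starGraph k⟩]) :=
    ramseyProp_ramseyNumber (Nat.succ_pos _)
      (ramseyProp_starGraph (Nat.lt_add_of_pos_left hk) (by nlinarith : k ≤ (k + 1) ^ 2))
  have succ_le_ramseyNumber : k + 1 ≤ ramseyNumber [C4, ⟨Fin (k + 1), starGraph k⟩] := by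
    simpa using card_le_of_ramseyProp (Y := ⟨Fin (k + 1), starGraph k⟩) C4_ne_bot star_prop
  refine ramseyNumber_le (Nat.succ_pos _) (ramseyProp_C4_of_comap_succ
    (one_lt_ceil_sqrt (by omega)) (le_ceil_sqrt_sq _) ?_)
  rwa [bookGraph_comap_succ]

/-- For `k ≥ 2`, `R(C₄,B_k) ≤ R(C₄,K_{1,k}) + ⌈√(R(C₄,K_{1,k}))⌉ + 1`, and
consequently `R(C₄,B_k) ≤ k + ⌈√(k + ⌈√k⌉ + 1)⌉ + ⌈√k⌉ + 2`. -/
theorem statement5 (k : ℕ) (hk : 2 ≤ k) :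
    ((ramseyNumber [C4, ⟨Fin (k + 2), bookGraph k⟩] : ℝ)) ≤
      (ramseyNumber [C4, ⟨Fin (k + 1), starGraph k⟩] : ℝ) +
      (⌈Real.sqrt (ramseyNumber [C4, ⟨Fin (k + 1), starGraph k⟩])⌉ : ℝ) + 1 ∧
    ((ramseyNumber [C4, ⟨Fin (k + 2), bookGraph k⟩] : ℝ)) ≤
      (k : ℝ) + (⌈Real.sqrt ((k : ℝ) + (⌈Real.sqrt k⌉ : ℝ) + 1)⌉ : ℝ) +
      (⌈Real.sqrt k⌉ : ℝ) + 2 := by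
  have book_le := ramseyNumber_bookGraph_le (zero_lt_two.trans_le hk)
  have star_le := ramseyNumber_starGraph_le hk
  generalize ramseyNumber [C4, ⟨Fin (k + 1), starGraph k⟩] = R at *
  generalize ramseyNumber [C4, ⟨Fin (k + 2), bookGraph k⟩] = B at *
  have ceil_le : ⌈√(R : ℝ)⌉₊ ≤ ⌈√((k : ℝ) + ⌈√(k : ℝ)⌉₊ + 1)⌉₊ :=
    Nat.ceil_mono (Real.sqrt_le_sqrt (by exact_mod_cast star_le))
  simp only [← natCast_ceil_eq_intCast_ceil (Real.sqrt_nonneg _)]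
  norm_cast at ceil_le ⊢
  omega
end

section
/- Let k, m ≥ 1 be integers with m + k > 3. Then R(C_4, …, C_4, K_{1,k}) (with m copies of C_4) ≤ k + (m² + m)/2 + ⌈ m · √( k + (m² + 2m − 3)/4 ) ⌉. -/
open SimpleGraph

/-!
Colour `K_N`, where `N = D + k`, with no `C₄` in the first `m` colours and no `K_{1,k}` in the
last one. Each vertex then has total degree at least `D` in the first `m` colours. Since two
vertices of a `C₄`-free graph have at most one common neighbour, counting paths of length two gives
`∑ v, deg v ^ 2 ≤ ∑ v, deg v + N (N - 1)` in each of these colours. If `D` is at least the larger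
root of `D ^ 2 - m D = m ^ 2 (D + k - 1)`, this is compatible with the lower bound on the degrees
only when all degrees are `D / m` and any two vertices have exactly one common neighbour in each of
the first `m` colours. By the friendship theorem these colour classes are then triangles, which
leaves only `k = m = 1`.
-/

section CommonNeighbors

variable {V : Type*} {G : SimpleGraph V}

lemma cycleGraph_four_isContained {u v x y : V} (huv : u ≠ v) (hxy : x ≠ y)
    (hux : G.Adj u x) (hvx : G.Adj v x) (huy : G.Adj u y) (hvy : G.Adj v y) :
    cycleGraph 4 ⊑ G := by
  have hinj : Function.Injective ![u, x, v, y] := by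
    intro a b hab
    fin_cases a <;> fin_cases b <;>
      simp_all [eq_comm, hux.ne, hvx.ne, huy.ne, hvy.ne]
  refine ⟨⟨⟨![u, x, v, y], fun {a b} hab => ?_⟩, hinj⟩⟩
  rw [cycleGraph_adj] at hab
  fin_cases a <;> fin_cases b <;> first
    | exact absurd hab (by decide)
    | simp [hux, hvx, huy, hvy, hux.symm, hvx.symm, huy.symm, hvy.symm]

variable [Fintype V] [DecidableRel G.Adj]

lemma card_commonNeighbors_le_one (hG : (cycleGraph 4).Free G) {u v : V} (huv : u ≠ v) :
    Fintype.card (G.commonNeighbors u v) ≤ 1 := by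
  refine Fintype.card_le_one_iff.2 fun ⟨x, hux, hvx⟩ ⟨y, huy, hvy⟩ => ?_
  by_contra hxy
  exact hG (cycleGraph_four_isContained huv (fun h => hxy (Subtype.ext h)) hux hvx huy hvy)

lemma card_commonNeighbors_self (u : V) :
    Fintype.card (G.commonNeighbors u u) = G.degree u := by
  rw [← card_neighborSet_eq_degree]
  simp only [commonNeighbors, Set.inter_self]

lemma sum_card_commonNeighbors (u : V) :
    ∑ v, Fintype.card (G.commonNeighbors u v) = ∑ w ∈ G.neighborFinset u, G.degree w := by
  classical
  convert! (Finset.sum_card_bipartiteAbove_eq_sum_card_bipartiteBelow G.Adj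
    (s := Finset.univ) (t := G.neighborFinset u)) using 2 with v _ w _
  · rw [← Set.toFinset_card]
    congr 1
    ext w
    simp [Finset.bipartiteAbove, mem_commonNeighbors]
  · rw [← card_neighborFinset_eq_degree]
    congr 1
    ext v
    simp [Finset.bipartiteBelow, G.adj_comm]

lemma degree_add_sum_erase_card_commonNeighbors [DecidableEq V] (u : V) :
    G.degree u + ∑ v ∈ Finset.univ.erase u, Fintype.card (G.commonNeighbors u v) =
      ∑ w ∈ G.neighborFinset u, G.degree w := by
  rw [← sum_card_commonNeighbors, ← Finset.add_sum_erase _ _ (Finset.mem_univ u),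
    card_commonNeighbors_self]

variable (G) in
lemma sum_sum_neighborFinset (f : V → ℕ) :
    ∑ u, ∑ w ∈ G.neighborFinset u, f w = ∑ w, G.degree w * f w := by
  rw [Finset.sum_comm' (t' := Finset.univ) (s' := fun w => G.neighborFinset w)
    (by simp [G.adj_comm])]
  simp

lemma sum_degree_neighborFinset_add_one_le (hG : (cycleGraph 4).Free G) (u : V) :
    ∑ w ∈ G.neighborFinset u, G.degree w + 1 ≤ G.degree u + Fintype.card V := by
  classical
  have hle : ∑ v ∈ Finset.univ.erase u, Fintype.card (G.commonNeighbors u v) ≤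
      ∑ v ∈ Finset.univ.erase u, 1 :=
    Finset.sum_le_sum fun v hv => card_commonNeighbors_le_one hG (Finset.ne_of_mem_erase hv).symm
  rw [Finset.sum_const, smul_eq_mul, mul_one] at hle
  have hcard : (Finset.univ.erase u).card + 1 = Fintype.card V :=
    Finset.card_erase_add_one (Finset.mem_univ u)
  rw [← degree_add_sum_erase_card_commonNeighbors]
  lia

lemma sum_degree_sq_add_card_le (hG : (cycleGraph 4).Free G) :
    ∑ v, G.degree v ^ 2 + Fintype.card V ≤ ∑ v, G.degree v + Fintype.card V ^ 2 := by
  have hsum := Finset.sum_le_sum fun u (_ : u ∈ Finset.univ) =>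
    sum_degree_neighborFinset_add_one_le hG u
  simpa [Finset.sum_add_distrib, sum_sum_neighborFinset, sq] using hsum

end CommonNeighbors

section Friendship

variable {V : Type*} [Fintype V] {G : SimpleGraph V} [DecidableRel G.Adj] {n d : ℕ}

lemma isSRGWith_one_one_of_free (hG : (cycleGraph 4).Free G) (hd : G.IsRegularOfDegree d)
    (hcard : Fintype.card V + d ≤ d ^ 2 + 1) : G.IsSRGWith (Fintype.card V) d 1 1 := by
  classical
  suffices hone : ∀ u v, u ≠ v → Fintype.card (G.commonNeighbors u v) = 1 from
    ⟨rfl, hd, fun u v huv => hone u v huv.ne, fun u v huv _ => hone u v huv⟩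
  intro u v huv
  have hle : ∀ w ∈ Finset.univ.erase u, Fintype.card (G.commonNeighbors u w) ≤ 1 :=
    fun w hw => card_commonNeighbors_le_one hG (Finset.ne_of_mem_erase hw).symm
  refine (Finset.sum_eq_sum_iff_of_le hle).1
    (le_antisymm (Finset.sum_le_sum hle) ?_) v (by simp [huv.symm])
  have hsum := degree_add_sum_erase_card_commonNeighbors (G := G) u
  simp only [hd.degree_eq, Finset.sum_const, card_neighborFinset_eq_degree, smul_eq_mul,
    ← sq] at hsum
  have hcard_erase : (Finset.univ.erase u).card + 1 = Fintype.card V :=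
    Finset.card_erase_add_one (Finset.mem_univ u)
  rw [Finset.sum_const, smul_eq_mul, mul_one]
  lia

lemma sq_add_one_of_isSRGWith_one_one [Nonempty V] (h : G.IsSRGWith n d 1 1) :
    d ^ 2 + 1 = d + n := by
  classical
  obtain ⟨u⟩ := ‹Nonempty V›
  have hone : ∀ v ∈ Finset.univ.erase u, Fintype.card (G.commonNeighbors u v) = 1 := by
    intro v hv
    by_cases huv : G.Adj u v
    · exact h.of_adj u v huv
    · exact h.of_not_adj (Finset.ne_of_mem_erase hv).symm huv
  have hsum := degree_add_sum_erase_card_commonNeighbors (G := G) u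
  rw [Finset.sum_congr rfl hone] at hsum
  simp only [h.regular.degree_eq, Finset.sum_const, card_neighborFinset_eq_degree, smul_eq_mul,
    mul_one] at hsum
  have hcard : (Finset.univ.erase u).card + 1 = Fintype.card V :=
    Finset.card_erase_add_one (Finset.mem_univ u)
  rw [h.card] at hcard
  lia

lemma adjMatrix_pow_add_two_of_isSRGWith_one_one {R : Type*} [Semiring R] [DecidableEq V]
    (h : G.IsSRGWith n d 1 1) (hd : (d : R) = 1) (j : ℕ) :
    G.adjMatrix R ^ (j + 2) = Matrix.of fun _ _ => 1 := by
  induction j with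
  | zero =>
    have hsq := h.matrix_eq (α := R)
    rw [← Nat.cast_smul_eq_nsmul R d, hd, one_smul, one_smul, one_smul] at hsq
    rw [zero_add, hsq]
    ext u v
    by_cases huv : u = v <;> by_cases hadj : G.Adj u v <;> simp_all
  | succ j ih =>
    ext u v
    rw [Nat.add_right_comm, pow_succ, ih, mul_adjMatrix_apply]
    simp [h.regular.degree_eq, hd]

/-- If a prime `p` divides `d - 1`, then modulo `p` the `p`-th power of the adjacency matrix is
the all-ones matrix, of trace `n = 1`, whereas its trace is the `p`-th power of `0`. -/
lemma degree_le_two_of_isSRGWith_one_one [Nonempty V] (h : G.IsSRGWith n d 1 1) : d ≤ 2 := by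
  classical
  by_contra! hd
  obtain ⟨p, hp, e, he⟩ := Nat.exists_prime_and_dvd (n := d - 1) (by lia)
  have : Fact p.Prime := ⟨hp⟩
  have hdp : (d : ZMod p) = 1 := by
    rw [show d = p * e + 1 by lia]
    simp
  have hnp : (n : ZMod p) = 1 := by
    have := congrArg (Nat.cast (R := ZMod p)) (sq_add_one_of_isSRGWith_one_one h)
    push_cast [hdp] at this
    linear_combination -this
  obtain ⟨j, rfl⟩ := Nat.exists_eq_add_of_le' hp.two_le
  have htrace := ZMod.trace_pow_card (G.adjMatrix (ZMod (j + 2)))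
  rw [adjMatrix_pow_add_two_of_isSRGWith_one_one h hdp, trace_adjMatrix,
    zero_pow hp.ne_zero] at htrace
  simp [Matrix.trace, h.card, hnp] at htrace

lemma eq_two_and_eq_three_of_isSRGWith_one_one [Nonempty V] (h : G.IsSRGWith n d 1 1)
    (hd : d ≠ 0) :
    d = 2 ∧ n = 3 := by
  obtain ⟨v⟩ := ‹Nonempty V›
  have hlt : d < n := h.card ▸ h.regular.degree_eq v ▸ G.degree_lt_card_verts v
  have hsq := sq_add_one_of_isSRGWith_one_one h
  have hle := degree_le_two_of_isSRGWith_one_one h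
  interval_cases d <;> lia

end Friendship

section Packing

variable {ι V : Type*} [Fintype ι] [Fintype V] {G : ι → SimpleGraph V}
  [∀ i, DecidableRel (G i).Adj] {D : ℕ}

lemma sum_sum_card_mul_degree_sub_sq_nonpos (hG : ∀ i, (cycleGraph 4).Free (G i))
    (hdeg : ∀ v, D ≤ ∑ i, (G i).degree v) (hmD : Fintype.card ι ≤ 2 * D)
    (hD : Fintype.card ι ^ 2 * Fintype.card V + Fintype.card ι * D ≤
      D ^ 2 + Fintype.card ι ^ 2) :
    ∑ i, ∑ v, ((Fintype.card ι : ℤ) * (G i).degree v - D) ^ 2 ≤ 0 := by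
  set m := Fintype.card ι
  set N := Fintype.card V
  set T : ℤ := ∑ i, ∑ v, ((G i).degree v : ℤ) with hT
  set S : ℤ := ∑ i, ∑ v, ((G i).degree v : ℤ) ^ 2 with hS
  have hT_ge : (N * D : ℤ) ≤ T := by
    rw [hT, Finset.sum_comm]
    simpa using Finset.card_nsmul_le_sum Finset.univ (fun v => ∑ i, ((G i).degree v : ℤ)) D
      fun v _ => mod_cast hdeg v
  have hS_le : S + m * N ≤ T + m * N ^ 2 := by
    have hsum := Finset.sum_le_sum fun i (_ : i ∈ Finset.univ) => sum_degree_sq_add_card_le (hG i)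
    simp only [Finset.sum_add_distrib, Finset.sum_const, Finset.card_univ, smul_eq_mul] at hsum
    rw [hS, hT]
    exact_mod_cast hsum
  have hexpand : ∑ i, ∑ v, ((m : ℤ) * (G i).degree v - D) ^ 2 =
      m ^ 2 * S - 2 * m * D * T + m * (N * D ^ 2) := by
    simp only [sub_sq, mul_pow, Finset.sum_add_distrib, Finset.sum_sub_distrib, hS, hT,
      Finset.mul_sum, Finset.sum_const, Finset.card_univ, nsmul_eq_mul]
    simp only [m, N, mul_assoc, mul_comm, mul_left_comm]
  zify at hmD hD
  have hS_le' := mul_le_mul_of_nonneg_left hS_le (sq_nonneg (m : ℤ))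
  have hT_ge' := mul_le_mul_of_nonneg_left hT_ge
    (mul_nonneg (Nat.cast_nonneg m) (sub_nonneg.2 hmD))
  have hD' := mul_le_mul_of_nonneg_left hD (by positivity : (0 : ℤ) ≤ m * N)
  linarith

lemma card_mul_degree_eq (hG : ∀ i, (cycleGraph 4).Free (G i))
    (hdeg : ∀ v, D ≤ ∑ i, (G i).degree v) (hmD : Fintype.card ι ≤ 2 * D)
    (hD : Fintype.card ι ^ 2 * Fintype.card V + Fintype.card ι * D ≤
      D ^ 2 + Fintype.card ι ^ 2)
    (i : ι) (v : V) : Fintype.card ι * (G i).degree v = D := by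
  set f : ι → V → ℤ := fun i v => ((Fintype.card ι : ℤ) * (G i).degree v - D) ^ 2
  have hf (i v) : 0 ≤ f i v := sq_nonneg _
  have hsq : f i v ≤ 0 :=
    calc f i v
        ≤ ∑ v, f i v := Finset.single_le_sum (fun v _ => hf i v) (Finset.mem_univ v)
      _ ≤ ∑ i, ∑ v, f i v := Finset.single_le_sum (f := fun i => ∑ v, f i v)
          (fun i _ => Finset.sum_nonneg fun v _ => hf i v) (Finset.mem_univ i)
      _ ≤ 0 := sum_sum_card_mul_degree_sub_sq_nonpos hG hdeg hmD hD
  exact_mod_cast sub_eq_zero.1 ((pow_eq_zero_iff two_ne_zero).1 (hsq.antisymm (hf i v)))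

lemma eq_card_mul_two_and_card_eq_three [Nonempty ι] [Nonempty V]
    (hG : ∀ i, (cycleGraph 4).Free (G i)) (hdeg : ∀ v, D ≤ ∑ i, (G i).degree v) (hD0 : 0 < D)
    (hD : Fintype.card ι ^ 2 * Fintype.card V + Fintype.card ι * D ≤
      D ^ 2 + Fintype.card ι ^ 2) :
    D = Fintype.card ι * 2 ∧ Fintype.card V = 3 := by
  obtain ⟨i⟩ := ‹Nonempty ι›
  have v : V := Classical.arbitrary V
  have hι : 0 < Fintype.card ι := Fintype.card_pos_iff.2 ⟨i⟩
  have hV : 0 < Fintype.card V := Fintype.card_pos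
  have hmD : Fintype.card ι ≤ D := by
    by_contra! hlt
    nlinarith
  have hmul := card_mul_degree_eq hG hdeg (by lia) hD i
  have hreg : (G i).IsRegularOfDegree ((G i).degree v) :=
    fun w => Nat.eq_of_mul_eq_mul_left hι ((hmul w).trans (hmul v).symm)
  have hcard : Fintype.card V + (G i).degree v ≤ (G i).degree v ^ 2 + 1 := by
    rw [← hmul v] at hD
    refine Nat.le_of_mul_le_mul_left ?_ (pow_pos hι 2)
    linarith
  have hd : (G i).degree v ≠ 0 := by
    intro h0
    have hDzero := hmul v
    rw [h0, mul_zero] at hDzero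
    lia
  obtain ⟨htwo, hthree⟩ := eq_two_and_eq_three_of_isSRGWith_one_one
    (isSRGWith_one_one_of_free (hG i) hreg hcard) hd
  exact ⟨by rw [← hmul v, htwo], hthree⟩

end Packing

section Coloring

variable {V κ : Type*}

/-- The graph formed by the edges of colour `i` in a colouring `c` of the complete graph on `V`.
The values of `c` on the diagonal of `Sym2 V` are ignored. -/
def colorClass (c : Sym2 V → κ) (i : κ) : SimpleGraph V :=
  fromEdgeSet (c ⁻¹' {i})

lemma colorClass_adj {c : Sym2 V → κ} {i : κ} {u v : V} :
    (colorClass c i).Adj u v ↔ c s(u, v) = i ∧ u ≠ v :=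
  fromEdgeSet_adj _

lemma sum_degree_colorClass_add_one [Fintype V] [Fintype κ] (c : Sym2 V → κ)
    [∀ i, DecidableRel (colorClass c i).Adj] (v : V) :
    ∑ i, (colorClass c i).degree v + 1 = Fintype.card V := by
  classical
  rw [← Finset.card_univ, ← Finset.card_erase_add_one (Finset.mem_univ v),
    Finset.card_eq_sum_card_fiberwise (f := fun w => c s(v, w)) (t := Finset.univ) (by simp)]
  congr! 2 with i
  rw [← card_neighborFinset_eq_degree]
  congr 1
  ext w
  simp [colorClass_adj, and_comm, eq_comm]

lemma starGraph_isContained_of_le_degree [Fintype V] {G : SimpleGraph V} [DecidableRel G.Adj]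
    {k : ℕ} {v : V} (h : k ≤ G.degree v) : _root_.starGraph k ⊑ G := by
  obtain ⟨e⟩ : Nonempty (Fin k ↪ G.neighborSet v) :=
    Function.Embedding.nonempty_of_card_le (by rwa [Fintype.card_fin, card_neighborSet_eq_degree])
  have hadj : ∀ j, G.Adj v (e j) := fun j => (e j).2
  have hinj : Function.Injective (Fin.cons v fun j => (e j : V) : Fin (k + 1) → V) :=
    Fin.cons_injective_iff.2
      ⟨fun ⟨j, hj⟩ => (hadj j).ne hj.symm, Subtype.val_injective.comp e.injective⟩
  refine ⟨⟨⟨_, fun {a b} hab => ?_⟩, hinj⟩⟩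
  obtain ⟨hne, rfl | rfl⟩ := (fromRel_adj _ _ _).1 hab
  · obtain ⟨j, rfl⟩ := Fin.exists_succ_eq.2 hne.symm
    exact hadj j
  · obtain ⟨j, rfl⟩ := Fin.exists_succ_eq.2 hne
    exact (hadj j).symm

lemma ramseyProp_iff {l : List VGraph} {N : ℕ} :
    ramseyProp l N ↔ ∀ c : Sym2 (Fin N) → Fin l.length, ∃ i, (l.get i).G ⊑ colorClass c i := by
  refine forall_congr' fun c => exists_congr fun i => ⟨fun ⟨f, hf⟩ => ?_, fun ⟨f⟩ => ?_⟩
  · exact ⟨⟨⟨f, fun h => colorClass_adj.2 ⟨hf _ _ h, f.injective.ne h.ne⟩⟩, f.injective⟩⟩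
  · exact ⟨f.toEmbedding, fun u v h => (colorClass_adj.1 (f.toHom.map_adj h)).1⟩

lemma ramseyProp_replicate_append_singleton {m N : ℕ} {X Y : VGraph}
    (h : ∀ c : Sym2 (Fin N) → Fin (m + 1),
      (∃ i : Fin m, X.G ⊑ colorClass c i.castSucc) ∨ Y.G ⊑ colorClass c (Fin.last m)) :
    ramseyProp (List.replicate m X ++ [Y]) N := by
  have hl : (List.replicate m X ++ [Y]).length = m + 1 := by simp
  refine ramseyProp_iff.2 fun c => ?_
  have hcast (i : Fin (m + 1)) :
      colorClass (Fin.cast hl ∘ c) i = colorClass c (i.cast hl.symm) := by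
    ext u v
    simp [colorClass_adj, Fin.ext_iff]
  obtain ⟨i, hi⟩ | hi := h (Fin.cast hl ∘ c)
  · refine ⟨i.castSucc.cast hl.symm, ?_⟩
    have hget : (List.replicate m X ++ [Y]).get (i.castSucc.cast hl.symm) = X := by
      simp [List.getElem_append_left]
    rwa [hget, ← hcast]
  · refine ⟨(Fin.last m).cast hl.symm, ?_⟩
    have hget : (List.replicate m X ++ [Y]).get ((Fin.last m).cast hl.symm) = Y := by simp
    rwa [hget, ← hcast]

end Coloring

lemma ramseyProp_replicate_C4_append_star {m k D : ℕ} (hm : 1 ≤ m) (hkm : k ≠ 1 ∨ m ≠ 1)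
    (hD0 : 0 < D) (hD : m ^ 2 * (D + k) + m * D ≤ D ^ 2 + m ^ 2) :
    ramseyProp (List.replicate m C4 ++ [⟨Fin (k + 1), _root_.starGraph k⟩]) (D + k) := by
  classical
  refine ramseyProp_replicate_append_singleton fun c => ?_
  by_contra hfree
  obtain ⟨hC4, hstar⟩ := not_or.1 hfree
  have : Nonempty (Fin m) := ⟨⟨0, hm⟩⟩
  have : Nonempty (Fin (D + k)) := ⟨⟨0, by lia⟩⟩
  have hdeg (v : Fin (D + k)) : D ≤ ∑ i : Fin m, (colorClass c i.castSucc).degree v := by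
    have hlast : (colorClass c (Fin.last m)).degree v < k := by
      by_contra! hge
      exact hstar (starGraph_isContained_of_le_degree hge)
    have hsum := sum_degree_colorClass_add_one c v
    rw [Fin.sum_univ_castSucc, Fintype.card_fin] at hsum
    lia
  obtain ⟨hDm, hcard⟩ :=
    eq_card_mul_two_and_card_eq_three (not_exists.1 hC4) hdeg hD0 (by simpa using hD)
  rw [Fintype.card_fin] at hDm hcard
  lia

/-- The hypothesis says that `D` is at least the larger root of
`D ^ 2 - (m ^ 2 + m) * D - m ^ 2 * (k - 1)`. -/
lemma sq_mul_add_le_of_mul_sqrt_le {m k D : ℝ} (hm : 1 ≤ m) (hk : 0 ≤ k)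
    (h : (m ^ 2 + m) / 2 + m * √(k + (m ^ 2 + 2 * m - 3) / 4) ≤ D) :
    m ^ 2 * (D + k) + m * D ≤ D ^ 2 + m ^ 2 := by
  have hsq : (m * √(k + (m ^ 2 + 2 * m - 3) / 4)) ^ 2 ≤ (D - (m ^ 2 + m) / 2) ^ 2 :=
    pow_le_pow_left₀ (by positivity) (by linarith) 2
  rw [mul_pow, Real.sq_sqrt (add_nonneg hk (by nlinarith))] at hsq
  linarith

theorem statement7_general (k m : ℕ) (hm : 1 ≤ m) (hkm : k ≠ 1 ∨ m ≠ 1) :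
    (ramseyNumber (List.replicate m C4 ++ [⟨Fin (k + 1), _root_.starGraph k⟩]) : ℝ) ≤
      k + ((m : ℝ) ^ 2 + m) / 2 + ⌈m * √(k + ((m : ℝ) ^ 2 + 2 * m - 3) / 4)⌉ := by
  set x : ℝ := m * √(k + ((m : ℝ) ^ 2 + 2 * m - 3) / 4)
  have hx : 0 ≤ x := by positivity
  obtain ⟨t, ht⟩ : ∃ t, m * (m + 1) = t + t := Nat.even_mul_succ_self m
  have htR : (t : ℝ) = ((m : ℝ) ^ 2 + m) / 2 := by
    rify at ht
    linarith
  have hD : m ^ 2 * (t + ⌈x⌉₊ + k) + m * (t + ⌈x⌉₊) ≤ (t + ⌈x⌉₊) ^ 2 + m ^ 2 := by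
    have hle : ((m : ℝ) ^ 2 + m) / 2 + x ≤ t + ⌈x⌉₊ := by grw [htR, ← Nat.le_ceil x]
    exact_mod_cast sq_mul_add_le_of_mul_sqrt_le (mod_cast hm) k.cast_nonneg hle
  have hR : ramseyNumber (List.replicate m C4 ++ [⟨Fin (k + 1), _root_.starGraph k⟩]) ≤
      t + ⌈x⌉₊ + k :=
    Nat.sInf_le ⟨by nlinarith, ramseyProp_replicate_C4_append_star hm hkm (by nlinarith) hD⟩
  rw [← natCast_ceil_eq_intCast_ceil hx, ← htR]
  rify at hR
  linarith

/-- For `k, m ≥ 1` with `m + k > 3`,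
`R(C₄,…,C₄ (m copies), K_{1,k}) ≤ k + (m²+m)/2 + ⌈m·√(k + (m²+2m−3)/4)⌉`. -/
theorem statement7 (k m : ℕ) (hk : 1 ≤ k) (hm : 1 ≤ m) (h : 3 < m + k) :
    ((ramseyNumber (List.replicate m C4 ++
        [(⟨Fin (k + 1), starGraph k⟩ : VGraph)]) : ℝ)) ≤
      (k : ℝ) + ((m : ℝ) ^ 2 + m) / 2 +
      (⌈(m : ℝ) * Real.sqrt ((k : ℝ) + ((m : ℝ) ^ 2 + 2 * m - 3) / 4)⌉ : ℝ) :=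
  statement7_general k m hm (by lia)
end
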